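/- arXiv:2302.13867 — 2 statements merged into one kernel-verified Lean document; each statement's English description precedes it below -/
import Mathlib

section
/- For any two sequences a and b with values in a commutative ring R, the Newton product (a ⊠ b)_n = Σ_{i=0}^n Σ_{j=0}^i C(n,i) C(i,j) a_i b_{n-j} satisfies a ⊠ b = [(a ⋆ 1) ⊙ (b ⋆ 1)] ⋆ e, where ⋆ is the binomial (Hurwitz) convolution, ⊙ is the Hadamard (termwise) product, 1 = (1,1,1,...) and e = ((-1)^n)_{n≥0}. -/
open Finset

/-- Hurwitz (binomial convolution) product of sequences. -/
def hurwitz {R : Type*} [CommRing R] (a b : ℕ → R) : ℕ → R :=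
  fun n => ∑ i ∈ Finset.range (n + 1), (n.choose i : R) * a i * b (n - i)

/-- Hadamard (termwise) product of sequences. -/
def hadamard {R : Type*} [CommRing R] (a b : ℕ → R) : ℕ → R :=
  fun n => a n * b n

/-- Newton (multinomial convolution) product of sequences. -/
def newton {R : Type*} [CommRing R] (a b : ℕ → R) : ℕ → R :=
  fun n => ∑ i ∈ Finset.range (n + 1), ∑ j ∈ Finset.range (i + 1),
    (n.choose i : R) * (i.choose j : R) * a i * b (n - j)

open Polynomial in
/-- The umbral functional of a sequence `a`, sending `X ^ i` to `a i`. -/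
noncomputable def umbral {R : Type*} [CommRing R] (a : ℕ → R) : R[X] →ₗ[R] R :=
  (Polynomial.basisMonomials R).constr R a

theorem umbral_X_pow {R : Type*} [CommRing R] (a : ℕ → R) (i : ℕ) :
    umbral a (Polynomial.X ^ i) = a i := by
  rw [umbral, ← Polynomial.monomial_one_right_eq_X_pow]
  simpa using (Polynomial.basisMonomials R).constr_basis R a i

theorem hurwitz_one {R : Type*} [CommRing R] (a : ℕ → R) (n : ℕ) :
    hurwitz a (fun _ => (1 : R)) n = umbral a ((Polynomial.X + 1) ^ n) := by
  rw [add_pow, map_sum]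
  refine Finset.sum_congr rfl fun i _ => ?_
  rw [one_pow, mul_one, mul_one, ← nsmul_eq_mul', map_nsmul, umbral_X_pow, nsmul_eq_mul]

open Polynomial TensorProduct in
/-- The umbral functional of a pair of sequences, sending `X ^ i ⊗ X ^ j` to `a i * b j`. -/
noncomputable def umbralPair {R : Type*} [CommRing R] (a b : ℕ → R) :
    R[X] ⊗[R] R[X] →ₗ[R] R :=
  LinearMap.mul' R R ∘ₗ TensorProduct.map (umbral a) (umbral b)

open TensorProduct in
theorem umbralPair_tmul {R : Type*} [CommRing R] (a b : ℕ → R) (p q : Polynomial R) :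
    umbralPair a b (p ⊗ₜ q) = umbral a p * umbral b q := by
  simp [umbralPair]

theorem mul_neg_one_pow_mul_natCast_eq_smul {R A : Type*} [CommRing R] [CommRing A] [Algebra R A]
    (t : A) (m c : ℕ) : t * (-1) ^ m * (c : A) = ((c : R) * (-1) ^ m) • t := by
  rw [Algebra.smul_def]
  simp only [map_mul, map_natCast, map_pow, map_neg, map_one]
  ring

open Polynomial TensorProduct in
theorem hurwitz_hadamard_eq_umbralPair {R : Type*} [CommRing R] (a b : ℕ → R) (n : ℕ) :
    hurwitz (hadamard (hurwitz a (fun _ => (1 : R))) (hurwitz b (fun _ => (1 : R))))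
        (fun n => (-1 : R) ^ n) n =
      umbralPair a b (((X + 1 : R[X]) ⊗ₜ[R] (X + 1 : R[X]) + (-1)) ^ n) := by
  rw [add_pow, map_sum]
  refine Finset.sum_congr rfl fun k _ => ?_
  have h : ((X + 1 : R[X]) ⊗ₜ[R] (X + 1 : R[X])) ^ k * (-1) ^ (n - k) *
      (n.choose k : R[X] ⊗[R] R[X]) =
      ((n.choose k : R) * (-1) ^ (n - k)) • (((X + 1 : R[X]) ^ k) ⊗ₜ[R] ((X + 1 : R[X]) ^ k)) := by
    rw [Algebra.TensorProduct.tmul_pow]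
    exact mul_neg_one_pow_mul_natCast_eq_smul _ _ _
  rw [h, map_smul, umbralPair_tmul, hadamard, hurwitz_one, hurwitz_one, smul_eq_mul]
  ring

open Polynomial TensorProduct in
theorem newton_eq_umbralPair {R : Type*} [CommRing R] (a b : ℕ → R) (n : ℕ) :
    newton a b n =
      umbralPair a b (((X : R[X]) ⊗ₜ[R] (X + 1 : R[X]) + (1 : R[X]) ⊗ₜ[R] (X : R[X])) ^ n) := by
  rw [add_pow, map_sum]
  refine Finset.sum_congr rfl fun i hi => ?_
  have hi : i ≤ n := Nat.lt_succ_iff.mp (Finset.mem_range.mp hi)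
  rw [← nsmul_eq_mul', map_nsmul, Algebra.TensorProduct.tmul_pow, Algebra.TensorProduct.tmul_pow,
    Algebra.TensorProduct.tmul_mul_tmul, one_pow, mul_one, umbralPair_tmul, umbral_X_pow,
    add_comm (X : R[X]) 1, add_pow, Finset.sum_mul, map_sum, Finset.mul_sum, Finset.smul_sum]
  refine Finset.sum_congr rfl fun j hj => ?_
  have hj : j ≤ i := Nat.lt_succ_iff.mp (Finset.mem_range.mp hj)
  have h : (1 : R[X]) ^ j * X ^ (i - j) * (i.choose j : R[X]) * X ^ (n - i) =
      i.choose j • X ^ (n - j) := by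
    rw [show n - j = (i - j) + (n - i) by omega, pow_add, nsmul_eq_mul]
    ring
  rw [h, map_nsmul, umbral_X_pow, nsmul_eq_mul, nsmul_eq_mul]
  ring

theorem newton_eq_hurwitz_hadamard {R : Type*} [CommRing R] (a b : ℕ → R) :
    newton a b =
      hurwitz (hadamard (hurwitz a (fun _ => (1 : R))) (hurwitz b (fun _ => (1 : R))))
        (fun n => (-1 : R) ^ n) := by
  funext n
  rw [newton_eq_umbralPair, hurwitz_hadamard_eq_umbralPair]
  congr 2
  simp only [TensorProduct.add_tmul, TensorProduct.tmul_add, Algebra.TensorProduct.one_def]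
  abel
end

section
/- Let R be an integral domain. Any R-algebra morphism ψ from (W(R), +, *) (linear recurrent sequences with Cauchy product) to (W(R), +, ⋆) (with Hurwitz product) fails to be injective. -/
open Finset

def cauchy {R : Type*} [CommRing R] (a b : ℕ → R) : ℕ → R :=
  fun n => ∑ i ∈ Finset.range (n + 1), a i * b (n - i)

def IsLinRec {R : Type*} [CommRing R] (a : ℕ → R) : Prop :=
  ∃ N : ℕ, 1 ≤ N ∧ ∃ h : ℕ → R, ∀ n, N ≤ n →
    a n = ∑ i ∈ Finset.range N, h i * a (n - 1 - i)

open Polynomial in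
/-- Over an algebraically closed field, a vector killed by a nonzero polynomial in `D` is a sum of
generalized eigenvectors of `D`. -/
theorem ker_aeval_le_iSup_maxGenEigenspace {K V : Type*} [Field K] [IsAlgClosed K]
    [AddCommGroup V] [Module K V] (D : Module.End K V) {p : K[X]} (hp : p ≠ 0) :
    LinearMap.ker (aeval D p) ≤ ⨆ μ, D.maxGenEigenspace μ := by
  induction p using UniqueFactorizationMonoid.induction_on_coprime with
  | h0 => exact absurd rfl hp
  | @h1 x hx =>
    obtain ⟨u, rfl⟩ := hx
    rw [Module.End.ker_aeval_ring_hom'_unit_polynomial]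
    exact bot_le
  | @hpr q i hq =>
    obtain ⟨c, hc⟩ := IsAlgClosed.exists_root q (degree_pos_of_irreducible hq.irreducible).ne'
    have hass : Associated (X - C c) q :=
      (prime_X_sub_C c).associated_of_dvd hq (dvd_iff_isRoot.mpr hc)
    obtain ⟨r, hr⟩ := (hass.pow_pow (n := i)).symm.dvd
    intro v hv
    refine Submodule.mem_iSup_of_mem c ((D.mem_maxGenEigenspace c v).mpr ⟨i, ?_⟩)
    have h : aeval D ((X - C c) ^ i) v = 0 := by
      rw [hr, mul_comm, aeval_mul, Module.End.mul_apply, LinearMap.mem_ker.mp hv, map_zero]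
    simpa [Algebra.algebraMap_eq_smul_one] using h
  | @hcp x y hxy hx hy =>
    rw [← sup_ker_aeval_eq_ker_aeval_mul_of_coprime D hxy.isCoprime]
    exact sup_le (hx (left_ne_zero_of_mul hp)) (hy (right_ne_zero_of_mul hp))

section HurwitzProduct

variable {R : Type*} [CommRing R]

theorem hurwitz_zero_apply (a b : ℕ → R) : hurwitz a b 0 = a 0 * b 0 := by
  simp [hurwitz]

theorem hurwitz_succ (a b : ℕ → R) (n : ℕ) :
    hurwitz a b (n + 1) =
      hurwitz (fun k => a (k + 1)) b n + hurwitz a (fun k => b (k + 1)) n := by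
  have h := Finset.sum_choose_succ_mul (fun i j => a i * b j) n
  simp only [hurwitz, mul_assoc]
  rw [h, add_comm]
  congr 1
  refine Finset.sum_congr rfl fun i hi => ?_
  rw [Nat.sub_add_comm (Nat.le_of_lt_succ (Finset.mem_range.mp hi))]

theorem hurwitz_add_left (a b c : ℕ → R) :
    hurwitz (a + b) c = hurwitz a c + hurwitz b c := by
  ext n
  simp [hurwitz, mul_add, add_mul, Finset.sum_add_distrib]

theorem hurwitz_smul_left (r : R) (a b : ℕ → R) :
    hurwitz (r • a) b = r • hurwitz a b := by
  ext n
  simp only [hurwitz, Pi.smul_apply, smul_eq_mul, Finset.mul_sum]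
  exact Finset.sum_congr rfl fun i _ => by ring

theorem hurwitz_comm (a b : ℕ → R) : hurwitz a b = hurwitz b a := by
  ext n
  induction n generalizing a b with
  | zero => simp [hurwitz_zero_apply, mul_comm]
  | succ n ih => rw [hurwitz_succ, hurwitz_succ, ih, ih a, add_comm]

theorem hurwitz_add_right (a b c : ℕ → R) :
    hurwitz a (b + c) = hurwitz a b + hurwitz a c := by
  simp only [hurwitz_comm a, hurwitz_add_left]

theorem hurwitz_assoc (a b c : ℕ → R) :
    hurwitz (hurwitz a b) c = hurwitz a (hurwitz b c) := by
  ext n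
  induction n generalizing a b c with
  | zero => simp [hurwitz_zero_apply, mul_assoc]
  | succ n ih =>
    have h (u v : ℕ → R) : (fun k => hurwitz u v (k + 1)) =
        hurwitz (fun k => u (k + 1)) v + hurwitz u (fun k => v (k + 1)) :=
      funext fun k => hurwitz_succ u v k
    simp only [hurwitz_succ (hurwitz a b), hurwitz_succ a (hurwitz b c), h, hurwitz_add_left,
      hurwitz_add_right, Pi.add_apply, ih]
    ring

theorem zero_hurwitz (a : ℕ → R) : hurwitz 0 a = 0 := by
  simpa using hurwitz_smul_left (0 : R) 0 a

theorem single_zero_hurwitz (a : ℕ → R) : hurwitz (Pi.single 0 1) a = a := by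
  ext n
  rw [hurwitz, Finset.sum_eq_single 0]
  · simp
  · intro i _ hi
    simp [hi]
  · simp

theorem hurwitz_apply_add_of_forall_lt {a b : ℕ → R} {m n : ℕ} (ha : ∀ i, m < i → a i = 0)
    (hb : ∀ i, n < i → b i = 0) :
    hurwitz a b (m + n) = ((m + n).choose m : R) * a m * b n := by
  rw [hurwitz, Finset.sum_eq_single m]
  · simp
  · intro i _ hi
    rcases lt_or_gt_of_ne hi with h | h
    · rw [hb (m + n - i) (by omega), mul_zero]
    · rw [ha i h, mul_zero, zero_mul]
  · intro h
    exact absurd (Finset.mem_range.mpr (by omega)) h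

theorem hurwitz_apply_add_of_forall_gt {a b : ℕ → R} {m n : ℕ} (ha : ∀ i, i < m → a i = 0)
    (hb : ∀ i, i < n → b i = 0) :
    hurwitz a b (m + n) = ((m + n).choose m : R) * a m * b n := by
  rw [hurwitz, Finset.sum_eq_single m]
  · simp
  · intro i hi' hi
    rcases lt_or_gt_of_ne hi with h | h
    · rw [ha i h, mul_zero, zero_mul]
    · rw [hb (m + n - i) (by have := Finset.mem_range.mp hi'; omega), mul_zero]
  · intro h
    exact absurd (Finset.mem_range.mpr (by omega)) h

theorem hurwitz_apply_eq_zero_of_add_lt {a b : ℕ → R} {m n k : ℕ} (ha : ∀ i, m < i → a i = 0)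
    (hb : ∀ i, n < i → b i = 0) (hk : m + n < k) : hurwitz a b k = 0 := by
  refine Finset.sum_eq_zero fun i _ => ?_
  rcases lt_or_ge m i with h | h
  · rw [ha i h, mul_zero, zero_mul]
  · rw [hb (k - i) (by omega), mul_zero]

end HurwitzProduct

section Derivation

variable {K E : Type*} [Field K] [CommRing E] [Algebra K E]

/-- The general Leibniz formula for a derivation twisted by scalars. -/
theorem Derivation.sub_smul_pow_mul (D : Derivation K E E) (μ ν : K) (f g : E) (n : ℕ) :
    (((D : Module.End K E) - (μ + ν) • (1 : Module.End K E)) ^ n) (f * g) =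
      hurwitz (fun i => (((D : Module.End K E) - μ • (1 : Module.End K E)) ^ i) f)
        (fun i => (((D : Module.End K E) - ν • (1 : Module.End K E)) ^ i) g) n := by
  induction n generalizing f g with
  | zero => simp [hurwitz_zero_apply]
  | succ n ih =>
    have h : ((D : Module.End K E) - (μ + ν) • (1 : Module.End K E)) (f * g) =
        ((D : Module.End K E) - μ • (1 : Module.End K E)) f * g +
          f * ((D : Module.End K E) - ν • (1 : Module.End K E)) g := by
      simp only [LinearMap.sub_apply, LinearMap.add_apply, LinearMap.smul_apply,
        Module.End.one_apply, Derivation.coeFn_coe, Derivation.leibniz, smul_eq_mul, add_smul, sub_mul, mul_sub,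
        smul_mul_assoc, mul_smul_comm]
      ring
    rw [pow_succ, Module.End.mul_apply, h, map_add, ih, ih, hurwitz_succ]
    simp only [pow_succ, Module.End.mul_apply]

/-- A nonzero generalized eigenvector has a well-defined order. -/
theorem exists_pow_apply_ne_zero {V : Type*} [AddCommGroup V] [Module K V] (A : Module.End K V)
    {v : V} (hv : v ≠ 0) (h : ∃ k : ℕ, (A ^ k) v = 0) :
    ∃ m : ℕ, (A ^ m) v ≠ 0 ∧ ∀ i, m < i → (A ^ i) v = 0 := by
  classical
  have hpos : Nat.find h ≠ 0 := fun h0 => hv (by simpa [h0] using Nat.find_spec h)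
  refine ⟨Nat.find h - 1, Nat.find_min h (by omega), fun i hi => ?_⟩
  obtain ⟨j, rfl⟩ : ∃ j, i = j + Nat.find h := ⟨i - Nat.find h, by omega⟩
  rw [pow_add, Module.End.mul_apply, Nat.find_spec h, map_zero]

theorem Derivation.mul_mem_maxGenEigenspace (D : Derivation K E E) {μ ν : K} {f g : E}
    (hf : f ∈ Module.End.maxGenEigenspace (D : E →ₗ[K] E) μ)
    (hg : g ∈ Module.End.maxGenEigenspace (D : E →ₗ[K] E) ν) :
    f * g ∈ Module.End.maxGenEigenspace (D : E →ₗ[K] E) (μ + ν) := by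
  rcases eq_or_ne f 0 with rfl | hf0
  · simp
  rcases eq_or_ne g 0 with rfl | hg0
  · simp
  rw [Module.End.mem_maxGenEigenspace] at hf hg ⊢
  obtain ⟨m, -, hm⟩ := exists_pow_apply_ne_zero _ hf0 hf
  obtain ⟨n, -, hn⟩ := exists_pow_apply_ne_zero _ hg0 hg
  refine ⟨m + n + 1, ?_⟩
  rw [D.sub_smul_pow_mul]
  exact hurwitz_apply_eq_zero_of_add_lt hm hn (Nat.lt_succ_self _)

variable [CharZero K] [IsDomain E]

theorem Derivation.apply_eq_smul_of_mul_eq_one_of_mem_maxGenEigenspace (D : Derivation K E E)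
    {μ ν : K} {f g : E} (hf : f ∈ Module.End.maxGenEigenspace (D : E →ₗ[K] E) μ)
    (hg : g ∈ Module.End.maxGenEigenspace (D : E →ₗ[K] E) ν) (hμν : μ + ν = 0) (hfg : f * g = 1) :
    D f = μ • f := by
  have : CharZero E := Algebra.charZero_of_charZero K E
  rw [Module.End.mem_maxGenEigenspace] at hf hg
  obtain ⟨m, hm0, hm⟩ := exists_pow_apply_ne_zero _ (left_ne_zero_of_mul_eq_one hfg) hf
  obtain ⟨n, hn0, hn⟩ := exists_pow_apply_ne_zero _ (right_ne_zero_of_mul_eq_one hfg) hg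
  have h := D.sub_smul_pow_mul μ ν f g (m + n)
  rw [hurwitz_apply_add_of_forall_lt hm hn, hμν, hfg, zero_smul, sub_zero] at h
  have hmn : m + n = 0 := by
    by_contra hne
    obtain ⟨k, hk⟩ := Nat.exists_eq_succ_of_ne_zero hne
    refine mul_ne_zero (mul_ne_zero ?_ hm0) hn0 (h.symm.trans ?_)
    · exact_mod_cast (Nat.choose_pos (Nat.le_add_right m n)).ne'
    · rw [hk, Nat.succ_eq_add_one, pow_succ, Module.End.mul_apply]
      simp
  have h1 := hm 1 (by omega)
  simpa [sub_eq_zero] using h1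

/-- A unit which, together with its inverse, is a sum of generalized eigenvectors of a derivation
is an eigenvector. -/
theorem Derivation.exists_apply_eq_smul_of_mul_eq_one (D : Derivation K E E) {f g : E}
    (hf : f ∈ ⨆ μ, Module.End.maxGenEigenspace (D : E →ₗ[K] E) μ)
    (hg : g ∈ ⨆ μ, Module.End.maxGenEigenspace (D : E →ₗ[K] E) μ) (hfg : f * g = 1) :
    ∃ μ : K, D f = μ • f := by
  classical
  obtain ⟨F, hF, rfl⟩ := (Submodule.mem_iSup_iff_exists_finsupp _ _).mp hf
  obtain ⟨G, hG, rfl⟩ := (Submodule.mem_iSup_iff_exists_finsupp _ _).mp hg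
  have key : ∀ a ∈ F.support, ∀ b ∈ G.support, UniqueAdd F.support G.support a b →
      a + b = 0 := by
    intro a ha b hb hu
    by_contra hab
    let P := F.support ×ˢ G.support
    let H : K → E := fun ν => ∑ q ∈ P with q.1 + q.2 = ν, F q.1 * G q.2
    let s : Finset K := insert 0 (P.image fun q => q.1 + q.2)
    have hH : ∑ ν ∈ s, H ν = 1 := by
      rw [← hfg, Finsupp.sum, Finsupp.sum, Finset.sum_mul_sum, ← Finset.sum_product']
      exact Finset.sum_fiberwise_of_maps_to
        (fun q hq => Finset.mem_insert_of_mem (Finset.mem_image_of_mem _ hq)) _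
    have hmem : ∀ ν ∈ s, H ν - (if ν = 0 then 1 else 0) ∈
        Module.End.maxGenEigenspace (D : E →ₗ[K] E) ν := by
      intro ν _
      refine Submodule.sub_mem _ (Submodule.sum_mem _ fun q hq => ?_) ?_
      · rw [← (Finset.mem_filter.mp hq).2]
        exact D.mul_mem_maxGenEigenspace (hF _) (hG _)
      · split_ifs with h
        · rw [h, Module.End.mem_maxGenEigenspace]
          exact ⟨1, by simp⟩
        · exact Submodule.zero_mem _
    have hsum : ∑ ν ∈ s, (H ν - (if ν = 0 then 1 else 0)) = 0 := by
      rw [Finset.sum_sub_distrib, hH, Finset.sum_ite_eq' s 0,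
        if_pos (Finset.mem_insert_self _ _), sub_self]
    have habP : (a, b) ∈ P := Finset.mem_product.mpr ⟨ha, hb⟩
    have h0 := (iSupIndep_iff_finsetSum_eq_zero_imp_eq_zero _).mp
      (Module.End.independent_maxGenEigenspace (D : Module.End K E)) s _ hmem hsum (a + b)
      (Finset.mem_insert_of_mem (Finset.mem_image.mpr ⟨(a, b), habP, rfl⟩))
    have hsingle : H (a + b) = F a * G b := by
      refine Finset.sum_eq_single_of_mem (a, b) (Finset.mem_filter.mpr ⟨habP, rfl⟩) ?_
      intro q hq hne
      obtain ⟨hqP, hq⟩ := Finset.mem_filter.mp hq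
      obtain ⟨h1, h2⟩ := hu (Finset.mem_product.mp hqP).1 (Finset.mem_product.mp hqP).2 hq
      exact absurd (Prod.ext h1 h2) hne
    rw [if_neg hab, sub_zero, hsingle] at h0
    exact mul_ne_zero (Finsupp.mem_support_iff.mp ha) (Finsupp.mem_support_iff.mp hb) h0
  have hcard : ¬ 1 < F.support.card * G.support.card := by
    intro h
    obtain ⟨p, hp, q, hq, hne, hup, huq⟩ := TwoUniqueSums.uniqueAdd_of_one_lt_card h
    rw [Finset.mem_product] at hp hq
    have hsum : p.1 + p.2 = q.1 + q.2 :=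
      (key _ hp.1 _ hp.2 hup).trans (key _ hq.1 _ hq.2 huq).symm
    obtain ⟨h1, h2⟩ := huq hp.1 hp.2 hsum
    exact hne (Prod.ext h1 h2)
  have hFpos : 0 < F.support.card := Finset.card_pos.mpr <| Finset.nonempty_iff_ne_empty.mpr
    fun h => left_ne_zero_of_mul_eq_one hfg (by rw [Finsupp.sum, h, Finset.sum_empty])
  have hGpos : 0 < G.support.card := Finset.card_pos.mpr <| Finset.nonempty_iff_ne_empty.mpr
    fun h => right_ne_zero_of_mul_eq_one hfg (by rw [Finsupp.sum, h, Finset.sum_empty])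
  obtain ⟨a, ha⟩ := Finset.card_eq_one.mp (show F.support.card = 1 by nlinarith)
  obtain ⟨b, hb⟩ := Finset.card_eq_one.mp (show G.support.card = 1 by nlinarith)
  have hab : a + b = 0 := key a (by simp [ha]) b (by simp [hb]) <| by
    rw [ha, hb]
    intro x y hx hy _
    exact ⟨Finset.mem_singleton.mp hx, Finset.mem_singleton.mp hy⟩
  rw [Finsupp.sum, Finsupp.sum, ha, hb, Finset.sum_singleton, Finset.sum_singleton] at hfg
  refine ⟨a, ?_⟩
  rw [Finsupp.sum, ha, Finset.sum_singleton]
  exact D.apply_eq_smul_of_mul_eq_one_of_mem_maxGenEigenspace (hF a) (hG b) hab hfg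

end Derivation

/-- Sequences in `R`, regarded as a ring under the Hurwitz product. -/
def HurwitzSeq (R : Type*) : Type _ := ℕ → R

namespace HurwitzSeq

variable {R : Type*} [CommRing R]

instance : AddCommGroup (HurwitzSeq R) := inferInstanceAs (AddCommGroup (ℕ → R))

instance : Module R (HurwitzSeq R) := inferInstanceAs (Module R (ℕ → R))

instance : CommRing (HurwitzSeq R) where
  __ := (inferInstance : AddCommGroup (HurwitzSeq R))
  mul := fun a b => hurwitz (R := R) a b
  one := (Pi.single 0 1 : ℕ → R)
  left_distrib := hurwitz_add_right
  right_distrib := hurwitz_add_left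
  zero_mul := zero_hurwitz
  mul_zero a := (hurwitz_comm _ _).trans (zero_hurwitz a)
  mul_assoc := hurwitz_assoc
  one_mul := single_zero_hurwitz
  mul_one a := (hurwitz_comm _ _).trans (single_zero_hurwitz a)
  mul_comm := hurwitz_comm

theorem mul_def (a b : HurwitzSeq R) : a * b = hurwitz (R := R) a b := rfl

instance : Algebra R (HurwitzSeq R) :=
  Algebra.ofModule hurwitz_smul_left fun r a b => by
    rw [mul_comm, mul_comm a]
    exact hurwitz_smul_left r b a

instance [IsDomain R] [CharZero R] : IsDomain (HurwitzSeq R) := by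
  classical
  have : Nontrivial (HurwitzSeq R) := inferInstanceAs (Nontrivial (ℕ → R))
  have : NoZeroDivisors (HurwitzSeq R) := by
    refine ⟨fun {a b} hab => ?_⟩
    by_contra! h
    have ha := Function.ne_iff.mp h.1
    have hb := Function.ne_iff.mp h.2
    have hprod := hurwitz_apply_add_of_forall_gt
      (fun i hi => not_not.mp (Nat.find_min ha hi)) (fun i hi => not_not.mp (Nat.find_min hb hi))
    refine mul_ne_zero (mul_ne_zero ?_ (Nat.find_spec ha)) (Nat.find_spec hb)
      (hprod.symm.trans (congrFun hab _))
    exact_mod_cast (Nat.choose_pos (Nat.le_add_right _ _)).ne'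
  exact NoZeroDivisors.to_isDomain _

/-- The shift is a derivation for the Hurwitz product. -/
def shift (R : Type*) [CommRing R] : Derivation R (HurwitzSeq R) (HurwitzSeq R) :=
  Derivation.mk'
    { toFun := fun a n => a (n + 1)
      map_add' := fun _ _ => rfl
      map_smul' := fun _ _ => rfl }
    fun a b => by
      rw [smul_eq_mul, smul_eq_mul, mul_comm b, add_comm]
      exact funext fun n => hurwitz_succ (R := R) a b n

theorem shift_pow_apply (a : HurwitzSeq R) (k n : ℕ) :
    ((shift R : Module.End R (HurwitzSeq R)) ^ k) a n = a (n + k) := by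
  induction k generalizing n with
  | zero => rfl
  | succ k ih =>
    rw [pow_succ', Module.End.mul_apply]
    exact (ih (n + 1)).trans (congrArg a (by omega))

/-- A sequence with vanishing shift is constant. -/
theorem eq_smul_one_of_shift_eq_zero {a : HurwitzSeq R} (h : shift R a = 0) :
    a = a 0 • (1 : HurwitzSeq R) := by
  funext n
  cases n with
  | zero => exact ((congrArg (a 0 * ·) (Pi.single_eq_same 0 1)).trans (mul_one _)).symm
  | succ n =>
    refine (congrFun h n).trans (Eq.symm ?_)
    exact (congrArg (a 0 * ·) (Pi.single_eq_of_ne n.succ_ne_zero 1)).trans (mul_zero _)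

theorem shift_pow_char_eq_zero (p : ℕ) [CharP R p] (a : HurwitzSeq R) :
    shift R (a ^ p) = 0 := by
  rw [Derivation.leibniz_pow, ← Nat.cast_smul_eq_nsmul R, CharP.cast_eq_zero, zero_smul]

/-- Coefficientwise application of a ring homomorphism. -/
def map {S : Type*} [CommRing S] (φ : R →+* S) (a : ℕ → R) : HurwitzSeq S := fun n => φ (a n)

theorem map_add {S : Type*} [CommRing S] (φ : R →+* S) (a b : ℕ → R) :
    map φ (a + b) = map φ a + map φ b :=
  funext fun _ => φ.map_add _ _

theorem map_smul {S : Type*} [CommRing S] (φ : R →+* S) (r : R) (a : ℕ → R) :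
    map φ (r • a) = φ r • map φ a :=
  funext fun _ => φ.map_mul _ _

theorem map_hurwitz {S : Type*} [CommRing S] (φ : R →+* S) (a b : ℕ → R) :
    map φ (hurwitz a b) = map φ a * map φ b := by
  funext n
  rw [mul_def]
  simp [map, hurwitz]

theorem map_injective {S : Type*} [CommRing S] {φ : R →+* S} (hφ : Function.Injective φ) :
    Function.Injective (map φ) :=
  fun _ _ h => funext fun n => hφ (congrFun h n)

open Polynomial in
theorem map_mem_iSup_maxGenEigenspace {K : Type*} [Field K] [IsAlgClosed K] (φ : R →+* K)
    {a : ℕ → R} (ha : IsLinRec a) :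
    map φ a ∈ ⨆ μ, Module.End.maxGenEigenspace (shift K : HurwitzSeq K →ₗ[K] HurwitzSeq K) μ := by
  obtain ⟨N, hN, h, hrec⟩ := ha
  let p : K[X] := X ^ N - ∑ i ∈ Finset.range N, C (φ (h i)) * X ^ (N - 1 - i)
  have hp : p ≠ 0 := by
    intro h0
    have hcoeff : p.coeff N = 1 := by
      simp only [p, coeff_sub, coeff_X_pow_self, finsetSum_coeff, coeff_C_mul, coeff_X_pow]
      rw [Finset.sum_eq_zero, sub_zero]
      intro i hi
      rw [if_neg (by omega), mul_zero]
    rw [h0, coeff_zero] at hcoeff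
    exact zero_ne_one hcoeff
  refine ker_aeval_le_iSup_maxGenEigenspace _ hp (LinearMap.mem_ker.mpr ?_)
  have hD : ((shift K : Module.End K (HurwitzSeq K)) ^ N) (map φ a) =
      ∑ i ∈ Finset.range N,
        φ (h i) • ((shift K : Module.End K (HurwitzSeq K)) ^ (N - 1 - i)) (map φ a) := by
    funext n
    rw [shift_pow_apply]
    refine (congrArg φ (hrec (n + N) (Nat.le_add_left _ _))).trans ?_
    rw [map_sum]
    refine Eq.trans ?_ (Finset.sum_apply n (Finset.range N) fun i =>
      (φ (h i) • ((shift K : Module.End K (HurwitzSeq K)) ^ (N - 1 - i)) (map φ a) :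
        ℕ → K)).symm
    refine Finset.sum_congr rfl fun i hi => ?_
    rw [map_mul]
    refine congrArg (φ (h i) * ·) (Eq.trans ?_ (shift_pow_apply _ _ _).symm)
    have hi := Finset.mem_range.mp hi
    exact congrArg (fun k => φ (a k)) (by omega)
  simp only [p, map_sub, map_pow, aeval_X, map_sum, map_mul, aeval_C, LinearMap.sub_apply,
    LinearMap.sum_apply, Module.End.mul_apply, Module.algebraMap_end_apply]
  rw [hD, sub_self]

end HurwitzSeq

section Cauchy

variable {R : Type*} [CommRing R]

theorem IsLinRec.single (k : ℕ) (r : R) : IsLinRec (Pi.single k r : ℕ → R) :=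
  ⟨k + 1, by omega, 0, fun n hn => by simp [Pi.single_apply, show n ≠ k by omega]⟩

theorem IsLinRec.pow (r : R) : IsLinRec (fun n => r ^ n) := by
  refine ⟨1, le_rfl, fun _ => r, fun n hn => ?_⟩
  obtain ⟨m, rfl⟩ := Nat.exists_eq_add_of_le' hn
  simp [pow_succ']

theorem IsLinRec.smul {a : ℕ → R} (ha : IsLinRec a) (r : R) : IsLinRec (r • a) := by
  obtain ⟨N, hN, h, hrec⟩ := ha
  refine ⟨N, hN, h, fun n hn => ?_⟩
  simp only [Pi.smul_apply, smul_eq_mul, hrec n hn, Finset.mul_sum]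
  exact Finset.sum_congr rfl fun i _ => by ring

theorem cauchy_single (k : ℕ) (a : ℕ → R) (n : ℕ) :
    cauchy (Pi.single k 1) a n = if k ≤ n then a (n - k) else 0 := by
  simp [cauchy, Pi.single_apply]

theorem cauchy_single_single (j k : ℕ) :
    cauchy (Pi.single j 1 : ℕ → R) (Pi.single k 1) = Pi.single (j + k) 1 := by
  ext n
  rw [cauchy_single]
  simp only [Pi.single_apply]
  split_ifs <;> first | rfl | omega

/-- The geometric sequence is the Cauchy inverse of `1 - rX`. -/
theorem single_zero_add_smul_cauchy_pow (r : R) :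
    cauchy (Pi.single 0 1) (fun n => r ^ n) = Pi.single 0 1 +
      r • cauchy (Pi.single 1 1) (fun n => r ^ n) := by
  ext n
  simp only [Pi.add_apply, Pi.smul_apply, cauchy_single, Pi.single_apply]
  cases n with
  | zero => simp
  | succ n => simp [pow_succ']

theorem IsLinRec.cauchy_single_one_pow (r : R) :
    IsLinRec (cauchy (Pi.single 1 1) (fun n => r ^ n)) := by
  refine ⟨2, by omega, Pi.single 0 r, fun n hn => ?_⟩
  obtain ⟨m, rfl⟩ := Nat.exists_eq_add_of_le' hn
  simp [cauchy_single, Finset.sum_range_succ, pow_succ']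

end Cauchy

/-- An element `y` for which `1 - y` and `1 + y` are eigenvectors of a derivation is a constant. -/
theorem Derivation.apply_eq_zero_of_one_sub_of_one_add {K E : Type*} [Field K] [CharZero K]
    [CommRing E] [IsDomain E] [Algebra K E] (D : Derivation K E E) {y : E} {μ ν : K}
    (hμ : D (1 - y) = μ • (1 - y)) (hν : D (1 + y) = ν • (1 + y)) : D y = 0 := by
  rw [map_sub, D.map_one_eq_zero, zero_sub] at hμ
  rw [map_add, D.map_one_eq_zero, zero_add] at hν
  have h : (μ - ν) • y = (μ + ν) • (1 : E) := by
    have h0 : μ • (1 - y) + ν • (1 + y) = 0 := by rw [← hμ, ← hν, neg_add_cancel]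
    simp only [smul_sub, smul_add, sub_smul, add_smul] at h0 ⊢
    linear_combination -h0
  rcases eq_or_ne μ ν with rfl | hne
  · rw [sub_self, zero_smul, eq_comm, smul_eq_zero, or_iff_left one_ne_zero, ← two_mul] at h
    have h0 : μ = 0 := (mul_eq_zero.mp h).resolve_left two_ne_zero
    rw [hν, h0, zero_smul]
  · have hD := congrArg D h
    rw [map_smul, map_smul, D.map_one_eq_zero, smul_zero] at hD
    exact (smul_eq_zero.mp hD).resolve_left (sub_ne_zero.mpr hne)

/-- Over an integral domain, any `R`-algebra morphism from `(W(R), +, *)` to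
`(W(R), +, ⋆)` fails to be injective. -/
theorem cauchy_to_hurwitz_not_injective {R : Type*} [CommRing R] [IsDomain R]
    (ψ : (ℕ → R) → (ℕ → R))
    (hmaps : Set.MapsTo ψ {a : ℕ → R | IsLinRec a} {a : ℕ → R | IsLinRec a})
    (hadd : ∀ a b, IsLinRec a → IsLinRec b → ψ (a + b) = ψ a + ψ b)
    (hsmul : ∀ (r : R) (a : ℕ → R), IsLinRec a → ψ (r • a) = r • ψ a)
    (hmul : ∀ a b, IsLinRec a → IsLinRec b → ψ (cauchy a b) = hurwitz (ψ a) (ψ b)) :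
    ¬ Set.InjOn ψ {a : ℕ → R | IsLinRec a} := by
  intro hinj
  let one : ℕ → R := Pi.single 0 1
  let X : ℕ → R := Pi.single 1 1
  have hone : IsLinRec one := IsLinRec.single 0 1
  have hX : IsLinRec X := IsLinRec.single 1 1
  have hconst (c : R) : IsLinRec (c • one) := hone.smul c
  have hne (k : ℕ) (hk : k ≠ 0) (c : R) :
      ψ (Pi.single k 1) ≠ ψ (c • one) := fun h => by
    have h' := congrFun (hinj (IsLinRec.single k 1) (hconst c) h) k
    simp [one, hk] at h'
  obtain ⟨p, hp⟩ := CharP.exists R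
  rcases CharP.char_is_prime_or_zero R p with hprime | rfl
  · let Y : HurwitzSeq R := ψ X
    have hpow (k : ℕ) : ψ (Pi.single (k + 1) 1) = Y ^ (k + 1) := by
      induction k with
      | zero => exact (pow_one Y).symm
      | succ k ih =>
        rw [add_comm (k + 1), ← cauchy_single_single, hmul _ _ hX (IsLinRec.single _ _), ih]
        exact (pow_succ' Y (k + 1)).symm.trans (congrArg (Y ^ ·) (add_comm _ _))
    obtain ⟨k, rfl⟩ := Nat.exists_eq_succ_of_ne_zero hprime.ne_zero
    have hYp := HurwitzSeq.eq_smul_one_of_shift_eq_zero (HurwitzSeq.shift_pow_char_eq_zero _ Y)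
    set c : R := (Y ^ (k + 1)) 0
    refine hne (k + 1) k.succ_ne_zero c ?_
    have hunit : cauchy one (Pi.single (k + 1) 1) = Pi.single (k + 1) 1 := by
      rw [cauchy_single_single, zero_add]
    rw [← hunit, hmul _ _ hone (IsLinRec.single _ _), hpow, hsmul _ _ hone]
    let e : HurwitzSeq R := ψ one
    change e * Y ^ (k + 1) = c • e
    rw [hYp, mul_smul_comm, mul_one]
  · have : CharZero R := CharP.charP_to_charZero R
    let K := AlgebraicClosure (FractionRing R)
    let φ : R →+* K := (algebraMap (FractionRing R) K).comp (algebraMap R (FractionRing R))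
    have hφ : Function.Injective φ :=
      (algebraMap (FractionRing R) K).injective.comp (IsFractionRing.injective R (FractionRing R))
    have : CharZero K := charZero_of_injective_ringHom hφ
    let Ψ : (ℕ → R) → HurwitzSeq K := fun a => HurwitzSeq.map φ (ψ a)
    have hΨ (a b : ℕ → R) (h : Ψ a = Ψ b) : ψ a = ψ b := HurwitzSeq.map_injective hφ h
    have hΨmul (a b : ℕ → R) (ha : IsLinRec a) (hb : IsLinRec b) :
        Ψ (cauchy a b) = Ψ a * Ψ b := by
      simp only [Ψ, hmul a b ha hb, HurwitzSeq.map_hurwitz]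
    have hΨsmul (r : R) (a : ℕ → R) (ha : IsLinRec a) : Ψ (r • a) = φ r • Ψ a := by
      simp only [Ψ, hsmul r a ha, HurwitzSeq.map_smul]
    have hΨmem (a : ℕ → R) (ha : IsLinRec a) :=
      HurwitzSeq.map_mem_iSup_maxGenEigenspace φ (hmaps ha)
    have hΨone : Ψ one = 1 := by
      have hidem : Ψ one * Ψ one = Ψ one := by
        rw [← hΨmul _ _ hone hone, cauchy_single_single]
      refine (mul_eq_left₀ fun h0 => ?_).mp hidem
      have hz : Ψ one = Ψ ((0 : R) • one) := by
        rw [hΨsmul _ _ hone, map_zero, zero_smul, h0]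
      have h' := congrFun (hinj hone (hconst 0) (hΨ _ _ hz)) 0
      simp [one] at h'
    have heigen (r : R) : ∃ μ : K, HurwitzSeq.shift K (1 - φ r • Ψ X) = μ • (1 - φ r • Ψ X) := by
      have hG := IsLinRec.pow r
      have hXG := IsLinRec.cauchy_single_one_pow r
      refine Derivation.exists_apply_eq_smul_of_mul_eq_one _
        (Submodule.sub_mem _ (hΨone ▸ hΨmem one hone) (Submodule.smul_mem _ _ (hΨmem X hX)))
        (hΨmem _ hG) ?_
      have hinv : Ψ (fun n => r ^ n) = 1 + φ r • (Ψ X * Ψ (fun n => r ^ n)) := by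
        have h := congrArg Ψ (single_zero_add_smul_cauchy_pow r)
        have hadd' : Ψ (one + r • cauchy X (fun n => r ^ n)) =
            Ψ one + Ψ (r • cauchy X (fun n => r ^ n)) :=
          (congrArg (HurwitzSeq.map φ) (hadd _ _ hone (hXG.smul r))).trans
            (HurwitzSeq.map_add φ _ _)
        rw [hΨmul _ _ hone hG, hadd', hΨsmul _ _ hXG, hΨmul _ _ hX hG, hΨone, one_mul] at h
        exact h
      change (1 - φ r • Ψ X) * Ψ (fun n => r ^ n) = 1
      rw [sub_mul, one_mul, smul_mul_assoc, sub_eq_iff_eq_add]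
      exact hinv
    obtain ⟨μ, hμ⟩ := heigen 1
    obtain ⟨ν, hν⟩ := heigen (-1)
    rw [map_one, one_smul] at hμ
    rw [map_neg, map_one, neg_one_smul, sub_neg_eq_add] at hν
    have hconstX := HurwitzSeq.eq_smul_one_of_shift_eq_zero
      (Derivation.apply_eq_zero_of_one_sub_of_one_add _ hμ hν)
    refine hne 1 one_ne_zero (ψ X 0) (hΨ _ _ ?_)
    rw [hΨsmul _ _ hone, hΨone]
    exact hconstX
end
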